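/- (Herbrand's theorem, semantic form.) Let L be a first-order language possessing at least one closed term, and let T be a set of universal L-sentences. If φ(v) is a quantifier-free L-formula with at most one free variable v and every (nonempty) model of T satisfies ∃v φ(v), then there exist finitely many closed L-terms t₁,…,tₙ such that every (nonempty) model of T satisfies φ(t₁) ∨ … ∨ φ(tₙ). -/

import Mathlib

open FirstOrder FirstOrder.Language

universe u v

/-- Substitution of a closed term `t` for the single variable of a formula `φ(v)` (with the
variable realised as the unique bounded variable of `φ`), producing the sentence `φ(t)`. -/
def substClosedTerm {L : FirstOrder.Language.{u, v}} (φ : L.BoundedFormula Empty 1)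
    (t : L.Term Empty) : L.Sentence :=
  φ.toFormula.subst (Sum.elim (fun e => Empty.elim e) fun _ => t)

theorem realize_substClosedTerm {L : FirstOrder.Language.{u, v}} (φ : L.BoundedFormula Empty 1)
    (t : L.Term Empty) {M : Type*} [L.Structure M] (w : Empty → M) (xs : Fin 0 → M) :
    BoundedFormula.Realize (substClosedTerm φ t) w xs ↔
      φ.Realize w (fun _ => t.realize w) := by
  have hxs : xs = default := Subsingleton.elim _ _
  subst hxs
  unfold substClosedTerm
  change Formula.Realize (BoundedFormula.subst _ _) w ↔ _
  unfold Formula.Realize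
  rw [BoundedFormula.realize_subst]
  have := BoundedFormula.realize_toFormula φ
    (fun a => Term.realize w (Sum.elim (fun e => Empty.elim e) (fun _ : Fin 1 => t) a))
  unfold Formula.Realize at this
  rw [this]
  have h1 : ((fun a => Term.realize w (Sum.elim (fun e => Empty.elim e) (fun _ : Fin 1 => t) a))
    ∘ Sum.inl : Empty → M) = w := Subsingleton.elim _ _
  rw [h1]
  rfl

/-- **Herbrand's theorem, semantic form.**  Let `L` be a first-order
language possessing at least one closed term, and let `T` be a set of universal
`L`-sentences.  If `φ(v)` is a quantifier-free `L`-formula with at most one free variable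
`v`, and every (nonempty) model of `T` satisfies `∃ v, φ(v)`, then there are finitely many
closed `L`-terms `t₁, …, tₙ` (`n ≥ 1`) such that every (nonempty) model of `T` satisfies
`φ(t₁) ∨ ⋯ ∨ φ(tₙ)`. -/
theorem statement18 (L : FirstOrder.Language.{u, v}) (T : L.Theory) (hT : T.IsUniversal)
    (hterm : Nonempty (L.Term Empty))
    (φ : L.BoundedFormula Empty 1) (hφ : φ.IsQF)
    (h : T ⊨ᵇ φ.ex) :
    ∃ ts : List (L.Term Empty), ts ≠ [] ∧
      T ⊨ᵇ (ts.map fun t => substClosedTerm φ t).foldr (· ⊔ ·) ⊥ := by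
  obtain ⟨t0⟩ := hterm
  have key : ¬ Theory.IsSatisfiable
      (⋃ t : L.Term Empty, (T ∪ {(substClosedTerm φ t).not} : L.Theory)) := by
    rintro ⟨M⟩
    have hM := M.is_model
    rw [Theory.model_iff] at hM
    have hMT : M ⊨ T := by
      rw [Theory.model_iff]
      intro σ hσ
      exact hM σ (Set.mem_iUnion.2 ⟨t0, Or.inl hσ⟩)
    let S : L.Substructure M := Substructure.closure L ∅
    have hST : S ⊨ T := Substructure.models_of_isUniversal S T
    have hmem : ∀ x : M, x ∈ S → ∃ t : L.Term Empty, t.realize Empty.elim = x := by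
      intro x hx
      obtain ⟨t, ht⟩ := Substructure.mem_closure_iff_exists_term.1 hx
      refine ⟨t.relabel (fun e => (e.2 : False).elim), ?_⟩
      rw [Term.realize_relabel, ← ht]
      congr 1
      funext e
      exact (e.2 : False).elim
    have hne : Nonempty S := ⟨⟨t0.realize Empty.elim, by
      have := (t0.realize (Empty.elim : Empty → S)).2
      have h2 := HomClass.realize_term S.subtype (t := t0) (v := (Empty.elim : Empty → S))
      have h3 : (S.subtype ∘ (Empty.elim : Empty → S)) = (Empty.elim : Empty → M) :=
        Subsingleton.elim _ _
      rw [h3] at h2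
      rw [h2]
      exact this⟩⟩
    have hex := h.realize_boundedFormula S (v := Empty.elim) (xs := default)
    rw [BoundedFormula.realize_ex] at hex
    obtain ⟨a, ha⟩ := hex
    obtain ⟨t, ht⟩ := hmem a a.2
    have hn := hM _ (Set.mem_iUnion.2 ⟨t, Or.inr rfl⟩)
    have ha' := (hφ.realize_embedding S.subtype).2 ha
    apply (BoundedFormula.realize_not.1 hn)
    rw [realize_substClosedTerm]
    convert ha' using 1
    · funext i
      have : i = Fin.last 0 := Subsingleton.elim _ _
      subst this
      rw [Function.comp_apply, Fin.snoc_last]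
      refine Eq.trans ?_ ht
      congr 1
      exact Subsingleton.elim _ _
  rw [Theory.isSatisfiable_iUnion_iff_isSatisfiable_iUnion_finset] at key
  push Not at key
  obtain ⟨s, hs⟩ := key
  refine ⟨t0 :: s.toList, by simp, ?_⟩
  intro M w xs
  by_contra hcon
  rw [BoundedFormula.realize_foldr_sup] at hcon
  apply hs
  have : M ⊨ (⋃ t ∈ s, (T ∪ {(substClosedTerm φ t).not} : L.Theory)) := by
    rw [Theory.model_iff]
    intro σ hσ
    simp only [Set.mem_iUnion] at hσ
    obtain ⟨t, hts, hσ⟩ := hσ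
    rcases hσ with hσ | hσ
    · exact Theory.realize_sentence_of_mem T hσ
    · rw [Set.mem_singleton_iff] at hσ
      subst hσ
      refine BoundedFormula.realize_not.2 fun hr => hcon ?_
      refine ⟨_, List.mem_map.2 ⟨t, by simp [hts], rfl⟩, ?_⟩
      rw [realize_substClosedTerm] at hr ⊢
      have : w = default := Subsingleton.elim _ _
      subst this
      exact hr
  exact Theory.Model.isSatisfiable M
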